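/- For every data path w with exactly k distinct data values, there exists a k-REM e_[w] such that L(e_[w]) = [w], the set of all data paths automorphic to w. -/

import Mathlib

/-- A data path `d₀ a₀ d₁ a₁ … a_{m−1} d_m`: a first data value followed by a
list of (letter, data value) pairs. -/
structure DataPath (A D : Type) where
  head : D
  tail : List (A × D)

namespace DataPath

/-- The last data value of a data path. -/
def lastVal {A D : Type} (w : DataPath A D) : D :=
  ((w.tail.getLast?).map Prod.snd).getD w.head

/-- Concatenation of data paths (meaningful when `w₁.lastVal = w₂.head`). -/
def comp {A D : Type} (w₁ w₂ : DataPath A D) : DataPath A D :=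
  ⟨w₁.head, w₁.tail ++ w₂.tail⟩

/-- Apply a map on data values to all data values of a data path. -/
def dmap {A D : Type} (π : D → D) (w : DataPath A D) : DataPath A D :=
  ⟨π w.head, w.tail.map (fun p => (p.1, π p.2))⟩

end DataPath

/-- Conditions over `k` registers. -/
inductive Cond (k : ℕ) where
  | top : Cond k
  | eq : Fin k → Cond k
  | ne : Fin k → Cond k
  | conj : Cond k → Cond k → Cond k
  | disj : Cond k → Cond k → Cond k
  | neg : Cond k → Cond k

/-- Satisfaction of a condition at data value `d` under assignment `τ`
(`none` is the empty register `⊥`, unequal to every data value). -/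
def CondSat {D : Type} {k : ℕ} (d : D) (τ : Fin k → Option D) : Cond k → Prop
  | .top => True
  | .eq i => τ i = some d
  | .ne i => τ i ≠ some d
  | .conj c₁ c₂ => CondSat d τ c₁ ∧ CondSat d τ c₂
  | .disj c₁ c₂ => CondSat d τ c₁ ∨ CondSat d τ c₂
  | .neg c => ¬ CondSat d τ c

/-- Regular expressions with memory over alphabet `A` with `k` registers. -/
inductive REM (A : Type) (k : ℕ) where
  | eps : REM A k
  | letter : A → REM A k
  | plus : REM A k → REM A k → REM A k
  | concat : REM A k → REM A k → REM A k
  | iter : REM A k → REM A k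
  | test : REM A k → Cond k → REM A k
  | bind : List (Fin k) → REM A k → REM A k

/-- Store `d` in each of the registers in `rs`. -/
def updReg {D : Type} {k : ℕ} (σ : Fin k → Option D) (rs : List (Fin k)) (d : D) :
    Fin k → Option D :=
  fun i => if i ∈ rs then some d else σ i

/-- The satisfaction relation `(e, w, σ) ⊢ σ'` of REMs on data paths. -/
inductive REMSat {A D : Type} {k : ℕ} :
    REM A k → DataPath A D → (Fin k → Option D) → (Fin k → Option D) → Prop
  | eps (d : D) (σ : Fin k → Option D) : REMSat .eps ⟨d, []⟩ σ σ
  | letter (a : A) (d₁ d₂ : D) (σ : Fin k → Option D) :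
      REMSat (.letter a) ⟨d₁, [(a, d₂)]⟩ σ σ
  | plusL {e₁ e₂ w σ σ'} : REMSat e₁ w σ σ' → REMSat (.plus e₁ e₂) w σ σ'
  | plusR {e₁ e₂ w σ σ'} : REMSat e₂ w σ σ' → REMSat (.plus e₁ e₂) w σ σ'
  | concat {e₁ e₂ w₁ w₂ σ σ₁ σ'} : w₁.lastVal = w₂.head →
      REMSat e₁ w₁ σ σ₁ → REMSat e₂ w₂ σ₁ σ' →
      REMSat (.concat e₁ e₂) (w₁.comp w₂) σ σ'
  | iterBase {e w σ σ'} : REMSat e w σ σ' → REMSat (.iter e) w σ σ'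
  | iterStep {e w₁ w₂ σ σ₁ σ'} : w₁.lastVal = w₂.head →
      REMSat e w₁ σ σ₁ → REMSat (.iter e) w₂ σ₁ σ' →
      REMSat (.iter e) (w₁.comp w₂) σ σ'
  | test {e c w σ σ'} : REMSat e w σ σ' → CondSat w.lastVal σ' c →
      REMSat (.test e c) w σ σ'
  | bind {rs e w σ σ'} : REMSat e w (updReg σ rs w.head) σ' →
      REMSat (.bind rs e) w σ σ'

/-- The language of a `k`-REM: data paths accepted starting from the empty
assignment `⊥^k`. -/
def REMLang {A D : Type} {k : ℕ} (e : REM A k) : Set (DataPath A D) :=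
  {w | ∃ σ' : Fin k → Option D, REMSat e w (fun _ => none) σ'}

/-- Regular expressions with equality over alphabet `A`. -/
inductive REE (A : Type) where
  | eps : REE A
  | letter : A → REE A
  | plus : REE A → REE A → REE A
  | concat : REE A → REE A → REE A
  | iter : REE A → REE A
  | eqTest : REE A → REE A
  | neTest : REE A → REE A

/-- The language of data paths of an REE. -/
inductive REELang {A D : Type} : REE A → DataPath A D → Prop
  | eps (d : D) : REELang .eps ⟨d, []⟩
  | letter (a : A) (d₁ d₂ : D) : REELang (.letter a) ⟨d₁, [(a, d₂)]⟩
  | plusL {e₁ e₂ w} : REELang e₁ w → REELang (.plus e₁ e₂) w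
  | plusR {e₁ e₂ w} : REELang e₂ w → REELang (.plus e₁ e₂) w
  | concat {e₁ e₂ w₁ w₂} : w₁.lastVal = w₂.head →
      REELang e₁ w₁ → REELang e₂ w₂ → REELang (.concat e₁ e₂) (w₁.comp w₂)
  | iterBase {e w} : REELang e w → REELang (.iter e) w
  | iterStep {e w₁ w₂} : w₁.lastVal = w₂.head →
      REELang e w₁ → REELang (.iter e) w₂ → REELang (.iter e) (w₁.comp w₂)
  | eqTest {e w} : REELang e w → w.head = w.lastVal → REELang (.eqTest e) w
  | neTest {e w} : REELang e w → w.head ≠ w.lastVal → REELang (.neTest e) w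

/-- A data graph: labeled edges over node type `V` and data values on nodes. -/
structure DataGraph (V A D : Type) where
  E : Set (V × A × V)
  ρ : V → D

/-- `Connects G u w v`: the data path `w` connects node `u` to node `v` in `G`. -/
inductive Connects {V A D : Type} (G : DataGraph V A D) : V → DataPath A D → V → Prop
  | nil (u : V) : Connects G u ⟨G.ρ u, []⟩ u
  | cons {u v x : V} {a : A} {t : List (A × D)} :
      (u, a, v) ∈ G.E → Connects G v ⟨G.ρ v, t⟩ x →
      Connects G u ⟨G.ρ u, (a, G.ρ v) :: t⟩ x

/-- A block `↓r̄.a[c]` of a basic REM. -/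
abbrev Block (A : Type) (k : ℕ) := List (Fin k) × A × Cond k

/-- The REM `↓r̄.a[c]` corresponding to a block. -/
def blockREM {A : Type} {k : ℕ} (b : Block A k) : REM A k :=
  .bind b.1 (.test (.letter b.2.1) b.2.2)

/-- The basic `k`-REM `↓r̄₁.a₁[c₁] · … · ↓r̄_m.a_m[c_m]` given by a list of blocks. -/
def basicREM {A : Type} {k : ℕ} : List (Block A k) → REM A k
  | [] => .eps
  | [b] => blockREM b
  | b :: bs => .concat (blockREM b) (basicREM bs)

/-- `e` is a `k`-REM witness for `(u, v)` in `S`: some data path in its language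
connects `u` to `v`, and every data path in its language only connects pairs in `S`. -/
def IsWitness {V A D : Type} {k : ℕ} (G : DataGraph V A D) (S : Set (V × V))
    (u v : V) (bs : List (Block A k)) : Prop :=
  (∃ w : DataPath A D, w ∈ REMLang (basicREM bs) ∧ Connects G u w v) ∧
  (∀ (u' v' : V) (w : DataPath A D),
      w ∈ REMLang (basicREM bs) → Connects G u' w v' → (u', v') ∈ S)

/-- A single transition of the `k`-assignment graph `T_G`, labeled by a block. -/
def AssignStep {V A D : Type} {k : ℕ} (G : DataGraph V A D) (b : Block A k)
    (s s' : V × (Fin k → Option D)) : Prop :=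
  (s.1, b.2.1, s'.1) ∈ G.E ∧ s'.2 = updReg s.2 b.1 (G.ρ s.1) ∧
    CondSat (G.ρ s'.1) s'.2 b.2.2

/-- A run in the `k`-assignment graph `T_G` along the blocks of a basic `k`-REM. -/
inductive AssignRun {V A D : Type} {k : ℕ} (G : DataGraph V A D) :
    List (Block A k) → V × (Fin k → Option D) → V × (Fin k → Option D) → Prop
  | nil (s : V × (Fin k → Option D)) : AssignRun G [] s s
  | cons {b bs s s' s''} : AssignStep G b s s' → AssignRun G bs s' s'' →
      AssignRun G (b :: bs) s s''

/-- The binary relation `S_e` defined by an REE `e` on a data graph `G`. -/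
def REEEval {V A D : Type} (G : DataGraph V A D) (e : REE A) : Set (V × V) :=
  {p : V × V | ∃ w : DataPath A D, REELang e w ∧ Connects G p.1 w p.2}

/-- Composition of binary relations. -/
def relComp {V : Type} (S₁ S₂ : Set (V × V)) : Set (V × V) :=
  {p : V × V | ∃ z : V, (p.1, z) ∈ S₁ ∧ (z, p.2) ∈ S₂}

/-- The `=`-restriction `S^=` of a relation. -/
def eqRes {V A D : Type} (G : DataGraph V A D) (S : Set (V × V)) : Set (V × V) :=
  {p ∈ S | G.ρ p.1 = G.ρ p.2}

/-- The `≠`-restriction `S^≠` of a relation. -/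
def neRes {V A D : Type} (G : DataGraph V A D) (S : Set (V × V)) : Set (V × V) :=
  {p ∈ S | G.ρ p.1 ≠ G.ρ p.2}

/-- Membership in the closure of a set `B` of binary relations under `+` (union)
and `∘` (composition). -/
inductive InClosure {V : Type} (B : Set (Set (V × V))) : Set (V × V) → Prop
  | base {S} : S ∈ B → InClosure B S
  | union {S₁ S₂} : InClosure B S₁ → InClosure B S₂ → InClosure B (S₁ ∪ S₂)
  | comp {S₁ S₂} : InClosure B S₁ → InClosure B S₂ → InClosure B (relComp S₁ S₂)

/-- The base set `B₀ = {S_ε} ∪ {S_a | a ∈ Σ}`. -/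
def B0 {V A D : Type} (G : DataGraph V A D) : Set (Set (V × V)) :=
  {S | S = REEEval G .eps ∨ ∃ a : A, S = REEEval G (.letter a)}

/-- The levels `L_i` of binary relations on a data graph. -/
def Level {V A D : Type} (G : DataGraph V A D) : ℕ → Set (Set (V × V))
  | 0 => {S | InClosure (B0 G) S}
  | i + 1 => {S | InClosure
      ((Level G i) ∪ (eqRes G '' (Level G i)) ∪ (neRes G '' (Level G i))) S}

/-- The identity relation (neutral element for composition). -/
def relId (V : Type) : Set (V × V) := {p : V × V | p.1 = p.2}

/-- `LabelConnects G u l v`: some path from `u` to `v` in `G` has label word `l`. -/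
inductive LabelConnects {V A D : Type} (G : DataGraph V A D) : V → List A → V → Prop
  | nil (u : V) : LabelConnects G u [] u
  | cons {u v x : V} {a : A} {l : List A} :
      (u, a, v) ∈ G.E → LabelConnects G v l x → LabelConnects G u (a :: l) x

/-- `q` is reachable from `p` in `G`. -/
def Reachable {V A D : Type} (G : DataGraph V A D) (p q : V) : Prop :=
  ∃ w : DataPath A D, Connects G p w q

/-- Data graph homomorphism: preserves labeled edges and, on reachable pairs,
preserves and reflects equality of data values. -/
def IsDGHom {V A D : Type} (G : DataGraph V A D) (h : V → V) : Prop :=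
  (∀ (p q : V) (a : A), (p, a, q) ∈ G.E → (h p, a, h q) ∈ G.E) ∧
  (∀ p q : V, Reachable G p q → (G.ρ p = G.ρ q ↔ G.ρ (h p) = G.ρ (h q)))

/-- A conjunctive regular data path query of arity `r`:
`Ans(z̄) := ⋀_i x_i →[e_i] y_i` where each `e_i` is an REM. -/
structure CRDPQ (A : Type) (r : ℕ) where
  nvars : ℕ
  m : ℕ
  src : Fin m → Fin nvars
  tgt : Fin m → Fin nvars
  nreg : Fin m → ℕ
  expr : (i : Fin m) → REM A (nreg i)
  out : Fin r → Fin nvars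

/-- The answer `Q(G)` of a CRDPQ on a data graph. -/
def CRDPQEval {V A D : Type} {r : ℕ} (G : DataGraph V A D) (Q : CRDPQ A r) :
    Set (Fin r → V) :=
  {t | ∃ μ : Fin Q.nvars → V,
        (∀ i : Fin Q.m, ∃ w : DataPath A D,
            w ∈ REMLang (Q.expr i) ∧ Connects G (μ (Q.src i)) w (μ (Q.tgt i))) ∧
        t = μ ∘ Q.out}

/-- `S` is definable by a union of conjunctive regular data path queries. -/
def UCRDPQDefinable {V A D : Type} {r : ℕ} (G : DataGraph V A D)
    (S : Set (Fin r → V)) : Prop :=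
  ∃ Qs : List (CRDPQ A r), S = {t | ∃ Q ∈ Qs, t ∈ CRDPQEval G Q}

/-- The condition that the current data value differs from the content of every register. -/
def condFresh (k : ℕ) : Cond k :=
  (List.finRange k).foldr (fun i c => .conj (.ne i) c) .top

theorem condSat_condFresh {D : Type} {k : ℕ} (d : D) (τ : Fin k → Option D) :
    CondSat d τ (condFresh k) ↔ ∀ i, τ i ≠ some d := by
  have key : ∀ l : List (Fin k),
      CondSat d τ (l.foldr (fun i c => .conj (.ne i) c) .top) ↔ ∀ i ∈ l, τ i ≠ some d := by
    intro l
    induction l with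
    | nil => simp [CondSat]
    | cons i l ih => simp [CondSat, ih]
  simpa [condFresh] using key (List.finRange k)

/-- The current data value is that of register `i` if `i` is already in use, and fresh
otherwise. -/
def condNext {k : ℕ} (seen : Finset (Fin k)) (i : Fin k) : Cond k :=
  if i ∈ seen then .eq i else condFresh k

/-- The assignment storing `g j` in every register `j ∈ seen`. -/
def seenAssign {D : Type} {k : ℕ} (seen : Finset (Fin k)) (g : Fin k → D) : Fin k → Option D :=
  fun j => if j ∈ seen then some (g j) else none

theorem updReg_seenAssign {D : Type} {k : ℕ} (seen : Finset (Fin k)) (g : Fin k → D)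
    (i : Fin k) : updReg (seenAssign seen g) [i] (g i) = seenAssign (insert i seen) g := by
  funext j
  by_cases h : j = i <;> simp [updReg, seenAssign, h]

theorem seenAssign_congr {D : Type} {k : ℕ} {seen : Finset (Fin k)} {g g' : Fin k → D}
    (h : ∀ j ∈ seen, g' j = g j) : seenAssign seen g' = seenAssign seen g := by
  funext j
  by_cases hj : j ∈ seen <;> simp [seenAssign, hj, h]

theorem condSat_condNext {D : Type} {k : ℕ} {emb : Fin k → D} (hemb : Function.Injective emb)
    (seen : Finset (Fin k)) (i : Fin k) (π : D ≃ D) (d : D) :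
    CondSat d (seenAssign seen (π ∘ emb)) (condNext seen i) ↔
      ∃ π' : D ≃ D, (∀ j ∈ seen, π' (emb j) = π (emb j)) ∧ π' (emb i) = d := by
  classical
  by_cases hi : i ∈ seen
  · simp only [condNext, hi, if_true, CondSat, seenAssign, Function.comp, Option.some.injEq]
    exact ⟨fun h => ⟨π, fun _ _ => rfl, h⟩, fun ⟨π', h, h'⟩ => (h i hi).symm.trans h'⟩
  · simp only [condNext, hi, if_false, condSat_condFresh]
    constructor
    · intro h
      refine ⟨π.trans (Equiv.swap (π (emb i)) d), fun j hj => ?_, by simp⟩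
      refine Equiv.swap_apply_of_ne_of_ne ?_ ?_
      · exact fun hji => hi (hemb (π.injective hji) ▸ hj)
      · simpa [seenAssign, hj] using h j
    · rintro ⟨π', h, rfl⟩ j hj
      by_cases hjs : j ∈ seen
      · simp only [seenAssign, hjs, if_true, Function.comp, ← h j hjs, Option.some.injEq] at hj
        exact hi (hemb (π'.injective hj) ▸ hjs)
      · simp [seenAssign, hjs] at hj

theorem remSat_bind_test_letter_iff {A D : Type} {k : ℕ} {rs : List (Fin k)} {a : A}
    {c : Cond k} {w : DataPath A D} {σ σ' : Fin k → Option D} :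
    REMSat (.bind rs (.test (.letter a) c)) w σ σ' ↔
      ∃ d, w.tail = [(a, d)] ∧ σ' = updReg σ rs w.head ∧ CondSat d σ' c := by
  constructor
  · rintro (_ | _ | _ | _ | _ | _ | _ | _ | h)
    obtain _ | _ | _ | _ | _ | _ | _ | ⟨h, hc⟩ | _ := h
    cases h
    exact ⟨_, rfl, rfl, hc⟩
  · obtain ⟨h, t⟩ := w
    rintro ⟨d, rfl, rfl, hc⟩
    exact .bind (.test (.letter a h d _) hc)

theorem remSat_eps_iff {A D : Type} {k : ℕ} {w : DataPath A D} {σ σ' : Fin k → Option D} :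
    REMSat .eps w σ σ' ↔ w.tail = [] ∧ σ' = σ := by
  constructor
  · rintro ⟨⟩
    exact ⟨rfl, rfl⟩
  · obtain ⟨h, t⟩ := w
    rintro ⟨rfl, rfl⟩
    exact .eps h _

theorem remSat_concat_iff {A D : Type} {k : ℕ} {e₁ e₂ : REM A k} {w : DataPath A D}
    {σ σ' : Fin k → Option D} :
    REMSat (.concat e₁ e₂) w σ σ' ↔
      ∃ w₁ w₂ σ₁, w = w₁.comp w₂ ∧ w₁.lastVal = w₂.head ∧
        REMSat e₁ w₁ σ σ₁ ∧ REMSat e₂ w₂ σ₁ σ' := by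
  constructor
  · intro h
    cases h with
    | concat h h₁ h₂ => exact ⟨_, _, _, rfl, h, h₁, h₂⟩
  · rintro ⟨w₁, w₂, σ₁, rfl, h, h₁, h₂⟩
    exact .concat h h₁ h₂

/-- The canonical REM of a path of register indices, where `seen` is the set of registers
already in use. -/
def canonicalREM {A : Type} {k : ℕ} : Finset (Fin k) → Fin k → List (A × Fin k) → REM A k
  | _, _, [] => .eps
  | seen, i, (a, j) :: t =>
      .concat (.bind [i] (.test (.letter a) (condNext (insert i seen) j)))
        (canonicalREM (insert i seen) j t)

theorem remSat_canonicalREM_iff {A D : Type} {k : ℕ} {emb : Fin k → D}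
    (hemb : Function.Injective emb) (t : List (A × Fin k)) (seen : Finset (Fin k)) (i : Fin k)
    (π : D ≃ D) (tl : List (A × D)) :
    (∃ σ', REMSat (canonicalREM seen i t) ⟨π (emb i), tl⟩ (seenAssign seen (π ∘ emb)) σ') ↔
      ∃ π' : D ≃ D, (∀ j ∈ insert i seen, π' (emb j) = π (emb j)) ∧
        tl = t.map (fun p => (p.1, π' (emb p.2))) := by
  induction t generalizing seen i π tl with
  | nil =>
    simp only [canonicalREM, remSat_eps_iff, List.map_nil]
    exact ⟨fun ⟨_, h, _⟩ => ⟨π, fun _ _ => rfl, h⟩, fun ⟨_, _, h⟩ => ⟨_, h, rfl⟩⟩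
  | cons p t ih =>
    obtain ⟨a, j⟩ := p
    have hupd := updReg_seenAssign seen (π ∘ emb) i
    simp only [canonicalREM, remSat_concat_iff, remSat_bind_test_letter_iff]
    constructor
    · rintro ⟨σ', ⟨h₁, t₁⟩, ⟨h₂, t₂⟩, _, hw, hlast, ⟨d, rfl, rfl, hc⟩, hsat⟩
      obtain ⟨rfl, rfl⟩ : π (emb i) = h₁ ∧ tl = (a, d) :: t₂ := by
        simpa [DataPath.comp] using hw
      obtain rfl : d = h₂ := by simpa [DataPath.lastVal] using hlast
      change CondSat d (updReg _ [i] ((π ∘ emb) i)) _ at hc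
      change REMSat _ _ (updReg _ [i] ((π ∘ emb) i)) _ at hsat
      rw [hupd] at hc hsat
      obtain ⟨π₁, hπ₁, rfl⟩ := (condSat_condNext hemb _ _ _ _).1 hc
      rw [← seenAssign_congr (g := π ∘ emb) (g' := π₁ ∘ emb) hπ₁] at hsat
      obtain ⟨π', hπ', rfl⟩ := (ih _ _ _ _).1 ⟨σ', hsat⟩
      refine ⟨π', fun l hl => ?_, ?_⟩
      · rw [hπ' l (Finset.mem_insert_of_mem hl), hπ₁ l hl]
      · simp [hπ' j (Finset.mem_insert_self _ _)]
    · rintro ⟨π', hπ', rfl⟩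
      obtain ⟨σ', hsat⟩ := (ih (insert i seen) j π' _).2 ⟨π', fun _ _ => rfl, rfl⟩
      rw [seenAssign_congr (g := π ∘ emb) (g' := π' ∘ emb) hπ'] at hsat
      refine ⟨σ', ⟨π (emb i), [(a, π' (emb j))]⟩, ⟨π' (emb j), _⟩, _, rfl, rfl,
        ⟨_, rfl, hupd.symm, ?_⟩, hsat⟩
      exact (condSat_condNext hemb _ _ _ _).2 ⟨π', hπ', rfl⟩

theorem remLang_canonicalREM {A D : Type} {k : ℕ} {emb : Fin k → D}
    (hemb : Function.Injective emb) (i : Fin k) (t : List (A × Fin k)) :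
    (REMLang (canonicalREM ∅ i t) : Set (DataPath A D)) =
      {w | ∃ π : D ≃ D, w = ⟨π (emb i), t.map (fun p => (p.1, π (emb p.2)))⟩} := by
  classical
  have hempty : ∀ π : D ≃ D, seenAssign ∅ (π ∘ emb) = fun _ => none := fun π => by
    funext j
    simp [seenAssign]
  ext ⟨h, tl⟩
  simp only [REMLang, Set.mem_ofPred_eq, DataPath.mk.injEq]
  constructor
  · intro hsat
    obtain ⟨π, rfl⟩ : ∃ π : D ≃ D, π (emb i) = h := ⟨Equiv.swap (emb i) h, by simp⟩
    rw [← hempty π] at hsat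
    obtain ⟨π', hπ', htl⟩ := (remSat_canonicalREM_iff hemb t ∅ i π tl).1 hsat
    exact ⟨π', (hπ' i (Finset.mem_insert_self _ _)).symm, htl⟩
  · rintro ⟨π, rfl, htl⟩
    rw [← hempty π]
    exact (remSat_canonicalREM_iff hemb t ∅ i π tl).2 ⟨π, fun _ _ => rfl, htl⟩

/-- for every data path `w` with exactly `k` distinct data values
there is a `k`-REM whose language is exactly the set `[w]` of data paths
automorphic to `w`. -/
theorem canonical_rem_exists {A D : Type} [Fintype A] [Countable D] [Infinite D]
    (w : DataPath A D) (k : ℕ)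
    (hk : {d : D | d = w.head ∨ ∃ p ∈ w.tail, p.2 = d}.ncard = k) :
    ∃ e : REM A k,
      (REMLang e : Set (DataPath A D)) =
        {w' : DataPath A D | ∃ π : D ≃ D, w' = DataPath.dmap (⇑π) w} := by
  set S : Set D := {d : D | d = w.head ∨ ∃ p ∈ w.tail, p.2 = d}
  have hhead : w.head ∈ S := Or.inl rfl
  have htail : ∀ p ∈ w.tail, p.2 ∈ S := fun p hp => Or.inr ⟨p, hp, rfl⟩
  have hfin : S.Finite := by
    refine ((w.head :: w.tail.map Prod.snd).finite_toSet).subset ?_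
    rintro d (rfl | ⟨p, hp, rfl⟩)
    · simp
    · exact List.mem_cons_of_mem _ (List.mem_map_of_mem hp)
  have : Finite S := hfin
  let f : S ≃ Fin k := Finite.equivFinOfCardEq hk
  have hemb : Function.Injective (fun j => (f.symm j : D)) :=
    Subtype.val_injective.comp f.symm.injective
  refine ⟨canonicalREM ∅ (f ⟨w.head, hhead⟩)
    (w.tail.attach.map fun p => (p.1.1, f ⟨p.1.2, htail p.1 p.2⟩)), ?_⟩
  rw [remLang_canonicalREM hemb]
  ext w'
  have hattach : ∀ π : D ≃ D, w.tail.attach.map (fun p => (p.1.1, π p.1.2)) =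
      w.tail.map (fun p => (p.1, π p.2)) := fun π =>
    List.attach_map_val (l := w.tail) (f := fun p => (p.1, π p.2))
  simp [DataPath.dmap, Function.comp_def, hattach]
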